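/- The multiplication on the reduced tensor module T̄(V) = ⊕_{n≥1} V^{⊗n} defined by (v_1...v_p)·(v_{p+1}...v_{p+q}) = Σ_{σ ∈ Sh(p,q−1)} ε(σ^{-1}) v_{σ^{-1}(1)} ... v_{σ^{-1}(p+q−1)} v_{p+q} satisfies the graded Zinbiel relation u·(v·w) = (u·v)·w + (−1)^{|u||v|}(v·u)·w. -/

import Mathlib

/-- The graded shuffle product on the tensor module over a graded vector space with
homogeneous basis `B` (degree function `d : B → ℕ`), realized on the free module on
words: the sum over shuffles of the two words with the Koszul signs. -/
noncomputable def shuffle (K : Type*) [Field K] {B : Type*} (d : B → ℕ) :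
    List B → List B → (List B →₀ K)
  | [], v => Finsupp.single v 1
  | a :: u, [] => Finsupp.single (a :: u) 1
  | a :: u, b :: v =>
      Finsupp.mapDomain (List.cons a) (shuffle K d u (b :: v)) +
        ((-1 : K) ^ (d b * (d a + (u.map d).sum))) •
          Finsupp.mapDomain (List.cons b) (shuffle K d (a :: u) v)
  termination_by u v => u.length + v.length
  decreasing_by all_goals simp

/-- The Zinbiel (half-shuffle) product of two basis words:
`u · (w ++ [b]) = (u ⧢ w) ⊗ b`, i.e. the sum over the `(p, q−1)`-shuffles keeping the
last letter of the second word last, with Koszul signs. -/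
noncomputable def zmulWord (K : Type*) [Field K] {B : Type*} (d : B → ℕ)
    (u v : List B) : (List B →₀ K) :=
  match v.getLast? with
  | none => 0
  | some b => Finsupp.mapDomain (fun l => l ++ [b]) (shuffle K d u v.dropLast)

/-- The bilinear extension of the Zinbiel product to the free module on words. -/
noncomputable def Zmul (K : Type*) [Field K] {B : Type*} (d : B → ℕ) :
    (List B →₀ K) →ₗ[K] (List B →₀ K) →ₗ[K] (List B →₀ K) :=
  Finsupp.lsum K fun u => LinearMap.toSpanSingleton K _
    (Finsupp.lsum K fun v => LinearMap.toSpanSingleton K _ (zmulWord K d u v))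

/-!
Put `x ⧢ y` for the shuffle product. Since `x · (y c) = (x ⧢ y) c` for a last letter `c`,
associativity of `⧢` gives `x · (y · z) = (x ⧢ y) · z`. Sorting the shuffles of two nonempty
words by their last letter gives `u ⧢ v = u · v + (-1)^{|u||v|} v · u`, and the Zinbiel relation
is the combination of these two identities.
-/

section HalfShuffle

open Finsupp

/-- Left concatenation by the letter `a`, as a linear operator on the tensor module; `shuffle` is
defined by recursion on first letters through it. -/
noncomputable def prependLetter (K : Type*) [Field K] {B : Type*} (a : B) :
    (List B →₀ K) →ₗ[K] (List B →₀ K) :=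
  lmapDomain K K (List.cons a)

/-- Right concatenation by the letter `a`, as a linear operator on the tensor module; its image
is where the Zinbiel product reduces to the shuffle product. -/
noncomputable def appendLetter (K : Type*) [Field K] {B : Type*} (a : B) :
    (List B →₀ K) →ₗ[K] (List B →₀ K) :=
  lmapDomain K K (fun l => l ++ [a])

/-- The shuffle product of the tensor module: the bilinear extension of `shuffle`, needed
to state associativity. -/
noncomputable def shuffleMul (K : Type*) [Field K] {B : Type*} (d : B → ℕ) :
    (List B →₀ K) →ₗ[K] (List B →₀ K) →ₗ[K] (List B →₀ K) :=
  lsum K fun u => LinearMap.toSpanSingleton K _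
    (lsum K fun v => LinearMap.toSpanSingleton K _ (shuffle K d u v))

/-- The homogeneous elements of degree `n` of the tensor module, the degree of a word being the
sum of the degrees of its letters. Moving a letter past such an element costs the same
Koszul sign for each of its words. -/
def homogeneousPart (K : Type*) [Field K] {B : Type*} (d : B → ℕ) (n : ℕ) :
    Submodule K (List B →₀ K) :=
  supported K K {u | (u.map d).sum = n}

variable {K B : Type*} [Field K]

theorem prependLetter_single (a : B) (u : List B) (r : K) :
    prependLetter K a (single u r) = single (a :: u) r :=
  mapDomain_single

theorem appendLetter_single (a : B) (u : List B) (r : K) :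
    appendLetter K a (single u r) = single (u ++ [a]) r :=
  mapDomain_single

theorem prependLetter_appendLetter (a b : B) (x : List B →₀ K) :
    prependLetter K a (appendLetter K b x) = appendLetter K b (prependLetter K a x) := by
  induction x using induction_linear with
  | zero => simp only [map_zero]
  | add x y hx hy => simp only [map_add, hx, hy]
  | single u r => simp only [appendLetter_single, prependLetter_single, List.cons_append]

variable (d : B → ℕ)

theorem single_mem_homogeneousPart (u : List B) (r : K) :
    single u r ∈ homogeneousPart K d (u.map d).sum :=
  single_mem_supported K r rfl

variable {d} in
theorem prependLetter_mem_homogeneousPart (a : B) {n : ℕ} {x : List B →₀ K}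
    (hx : x ∈ homogeneousPart K d n) :
    prependLetter K a x ∈ homogeneousPart K d (d a + n) := by
  rw [homogeneousPart, supported_eq_span_single] at hx
  induction hx using Submodule.span_induction with
  | mem _ h =>
    obtain ⟨u, rfl, rfl⟩ := h
    rw [prependLetter_single]
    exact single_mem_homogeneousPart d (a :: u) 1
  | zero => simp only [map_zero, Submodule.zero_mem]
  | add x y _ _ hx hy => simpa only [map_add] using add_mem hx hy
  | smul r x _ hx => simpa only [map_smul] using Submodule.smul_mem _ r hx

theorem shuffle_nil_left (v : List B) : shuffle K d [] v = single v 1 := by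
  rw [shuffle]

theorem shuffle_nil_right (u : List B) : shuffle K d u [] = single u 1 := by
  cases u <;> rw [shuffle]

theorem shuffle_cons_cons (a b : B) (u v : List B) :
    shuffle K d (a :: u) (b :: v) =
      prependLetter K a (shuffle K d u (b :: v)) +
        (-1 : K) ^ (d b * (d a + (u.map d).sum)) •
          prependLetter K b (shuffle K d (a :: u) v) := by
  rw [shuffle]
  rfl

theorem shuffle_mem_homogeneousPart (u v : List B) :
    shuffle K d u v ∈ homogeneousPart K d ((u.map d).sum + (v.map d).sum) := by
  match u, v with
  | [], v => simpa [shuffle_nil_left] using single_mem_homogeneousPart d v (1 : K)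
  | a :: u, [] => simpa [shuffle_nil_right] using single_mem_homogeneousPart d (a :: u) (1 : K)
  | a :: u, b :: v =>
    have first_a := prependLetter_mem_homogeneousPart a (shuffle_mem_homogeneousPart u (b :: v))
    have first_b := prependLetter_mem_homogeneousPart b (shuffle_mem_homogeneousPart (a :: u) v)
    rw [shuffle_cons_cons]
    refine add_mem ?_ (Submodule.smul_mem _ _ ?_)
    · convert first_a using 2
      simp only [List.map_cons, List.sum_cons, add_assoc]
    · convert first_b using 2
      simp only [List.map_cons, List.sum_cons]
      ring
  termination_by u.length + v.length
  decreasing_by all_goals simp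

theorem shuffle_comm (u v : List B) :
    shuffle K d u v = (-1 : K) ^ ((u.map d).sum * (v.map d).sum) • shuffle K d v u := by
  match u, v with
  | [], v => simp [shuffle_nil_left, shuffle_nil_right]
  | a :: u, [] => simp [shuffle_nil_left, shuffle_nil_right]
  | a :: u, b :: v =>
    rw [shuffle_cons_cons, shuffle_cons_cons, shuffle_comm u (b :: v), shuffle_comm (a :: u) v,
      add_comm]
    simp only [map_smul, smul_smul, smul_add, List.map_cons, List.sum_cons, ← pow_add]
    congr 2
    · ring
    · apply neg_one_pow_congr
      simp only [Nat.even_add, Nat.even_mul]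
      tauto
  termination_by u.length + v.length
  decreasing_by all_goals simp

theorem shuffle_append_singleton (a b : B) (u v : List B) :
    shuffle K d (u ++ [a]) (v ++ [b]) =
      appendLetter K b (shuffle K d (u ++ [a]) v) +
        (-1 : K) ^ (d a * ((v.map d).sum + d b)) •
          appendLetter K a (shuffle K d u (v ++ [b])) := by
  match u, v with
  | [], [] =>
    simp [shuffle_cons_cons, shuffle_nil_left, shuffle_nil_right, prependLetter_single,
      appendLetter_single, mul_comm]
  | [], y :: v =>
    have ih := shuffle_append_singleton a b [] v
    simp only [List.nil_append, List.cons_append] at ih ⊢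
    simp only [shuffle_cons_cons, ih, shuffle_nil_left, prependLetter_appendLetter,
      prependLetter_single, appendLetter_single, map_add, map_smul, List.map_cons, List.sum_cons,
      List.map_nil, List.sum_nil, List.cons_append]
    module
  | x :: u, [] =>
    have ih := shuffle_append_singleton a b u []
    simp only [List.nil_append, List.cons_append] at ih ⊢
    simp only [shuffle_cons_cons, ih, shuffle_nil_right, prependLetter_appendLetter,
      prependLetter_single, appendLetter_single, map_add, map_smul, List.map_cons, List.sum_cons,
      List.map_nil, List.sum_nil, List.map_append, List.sum_append, List.cons_append]
    module
  | x :: u, y :: v =>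
    have ih_left := shuffle_append_singleton a b u (y :: v)
    have ih_right := shuffle_append_singleton a b (x :: u) v
    simp only [List.cons_append] at ih_left ih_right ⊢
    rw [shuffle_cons_cons, ih_left, ih_right, shuffle_cons_cons, shuffle_cons_cons]
    simp only [prependLetter_appendLetter, map_add, map_smul, List.map_cons, List.sum_cons,
      List.map_append, List.sum_append, List.map_nil, List.sum_nil]
    module
  termination_by u.length + v.length
  decreasing_by all_goals simp

theorem shuffleMul_single (u v : List B) :
    shuffleMul K d (single u 1) (single v 1) = shuffle K d u v := by
  simp [shuffleMul]

theorem shuffleMul_one_left (x : List B →₀ K) : shuffleMul K d (single [] 1) x = x := by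
  have h : shuffleMul K d (single [] 1) = LinearMap.id := by
    ext u : 2
    simp [shuffleMul_single, shuffle_nil_left]
  exact LinearMap.congr_fun h x

theorem shuffleMul_one_right (x : List B →₀ K) : shuffleMul K d x (single [] 1) = x := by
  have h : (shuffleMul K d).flip (single [] 1) = LinearMap.id := by
    ext u : 2
    simp [shuffleMul_single, shuffle_nil_right]
  exact LinearMap.congr_fun h x

variable {d} in
theorem shuffleMul_prependLetter (a b : B) {n : ℕ} {x : List B →₀ K}
    (hx : x ∈ homogeneousPart K d n) (y : List B →₀ K) :
    shuffleMul K d (prependLetter K a x) (prependLetter K b y) =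
      prependLetter K a (shuffleMul K d x (prependLetter K b y)) +
        (-1 : K) ^ (d b * (d a + n)) •
          prependLetter K b (shuffleMul K d (prependLetter K a x) y) := by
  rw [homogeneousPart, supported_eq_span_single] at hx
  induction hx using Submodule.span_induction with
  | mem _ h =>
    obtain ⟨u, rfl, rfl⟩ := h
    induction y using induction_linear with
    | zero => simp only [map_zero, smul_zero, add_zero]
    | add y z hy hz =>
      simp only [map_add, hy, hz]
      module
    | single v s =>
      rw [← smul_single_one]
      simp only [map_smul, prependLetter_single, shuffleMul_single, shuffle_cons_cons]
      module
  | zero => simp only [map_zero, LinearMap.zero_apply, smul_zero, add_zero]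
  | add x z _ _ hx hz =>
    simp only [map_add, LinearMap.add_apply, hx, hz]
    module
  | smul r x _ hx =>
    simp only [map_smul, LinearMap.smul_apply, hx]
    module

theorem shuffleMul_single_cons_shuffle (a b c : B) (u v w : List B) :
    shuffleMul K d (single (a :: u) 1) (shuffle K d (b :: v) (c :: w)) =
      prependLetter K a (shuffleMul K d (single u 1) (shuffle K d (b :: v) (c :: w))) +
      (-1 : K) ^ (d b * (d a + (u.map d).sum)) •
        prependLetter K b (shuffleMul K d (single (a :: u) 1) (shuffle K d v (c :: w))) +
      (-1 : K) ^ (d c * (d a + (u.map d).sum + (d b + (v.map d).sum))) •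
        prependLetter K c (shuffleMul K d (single (a :: u) 1) (shuffle K d (b :: v) w)) := by
  have hu := single_mem_homogeneousPart d u (1 : K)
  rw [shuffle_cons_cons d b c, ← prependLetter_single a u]
  simp only [map_add, map_smul, shuffleMul_prependLetter _ _ hu]
  module

theorem shuffleMul_shuffle_single_cons (a b c : B) (u v w : List B) :
    shuffleMul K d (shuffle K d (a :: u) (b :: v)) (single (c :: w) 1) =
      prependLetter K a (shuffleMul K d (shuffle K d u (b :: v)) (single (c :: w) 1)) +
      (-1 : K) ^ (d b * (d a + (u.map d).sum)) •
        prependLetter K b (shuffleMul K d (shuffle K d (a :: u) v) (single (c :: w) 1)) +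
      (-1 : K) ^ (d c * (d a + (u.map d).sum + (d b + (v.map d).sum))) •
        prependLetter K c (shuffleMul K d (shuffle K d (a :: u) (b :: v)) (single w 1)) := by
  have first_a := shuffle_mem_homogeneousPart (K := K) d u (b :: v)
  have first_b := shuffle_mem_homogeneousPart (K := K) d (a :: u) v
  rw [shuffle_cons_cons d a b, ← prependLetter_single c w]
  simp only [map_add, map_smul, LinearMap.add_apply, LinearMap.smul_apply,
    shuffleMul_prependLetter _ _ first_a, shuffleMul_prependLetter _ _ first_b,
    List.map_cons, List.sum_cons]
  module

theorem shuffleMul_shuffle (u v w : List B) :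
    shuffleMul K d (shuffle K d u v) (single w 1) =
      shuffleMul K d (single u 1) (shuffle K d v w) := by
  match u, v, w with
  | [], v, w => rw [shuffle_nil_left, shuffleMul_one_left, shuffleMul_single]
  | u, [], w => rw [shuffle_nil_left, shuffle_nil_right]
  | u, v, [] => rw [shuffle_nil_right, shuffleMul_one_right, shuffleMul_single]
  | a :: u, b :: v, c :: w =>
    rw [shuffleMul_shuffle_single_cons, shuffleMul_single_cons_shuffle,
      shuffleMul_shuffle u (b :: v) (c :: w), shuffleMul_shuffle (a :: u) v (c :: w),
      shuffleMul_shuffle (a :: u) (b :: v) w]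
  termination_by u.length + v.length + w.length
  decreasing_by all_goals simp

theorem shuffleMul_assoc (x y z : List B →₀ K) :
    shuffleMul K d (shuffleMul K d x y) z = shuffleMul K d x (shuffleMul K d y z) := by
  have h : (shuffleMul K d).compr₂ (shuffleMul K d) =
      (LinearMap.llcomp K _ _ _).compl₁₂ (shuffleMul K d) (shuffleMul K d) := by
    ext u v w : 6
    simp [shuffleMul_single, shuffleMul_shuffle]
  exact LinearMap.congr_fun (LinearMap.congr_fun₂ h x y) z

theorem Zmul_single_nil (x : List B →₀ K) : Zmul K d x (single [] 1) = 0 := by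
  have h : (Zmul K d).flip (single [] 1) = 0 := by
    ext u : 2
    simp [Zmul, zmulWord]
  exact LinearMap.congr_fun h x

theorem Zmul_appendLetter (c : B) (x y : List B →₀ K) :
    Zmul K d x (appendLetter K c y) = appendLetter K c (shuffleMul K d x y) := by
  have h : (Zmul K d).compl₂ (appendLetter K c) = (shuffleMul K d).compr₂ (appendLetter K c) := by
    ext u v : 4
    simp [Zmul, zmulWord, appendLetter, shuffleMul_single]
  exact LinearMap.congr_fun₂ h x y

theorem Zmul_shuffleMul (x y z : List B →₀ K) :
    Zmul K d (shuffleMul K d x y) z = Zmul K d x (Zmul K d y z) := by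
  have h : Zmul K d (shuffleMul K d x y) = Zmul K d x ∘ₗ Zmul K d y := by
    ext w : 2
    simp only [LinearMap.comp_apply, lsingle_apply]
    obtain rfl | ⟨w, c, rfl⟩ := w.eq_nil_or_concat'
    · simp only [Zmul_single_nil, map_zero]
    · simp only [← appendLetter_single, Zmul_appendLetter, shuffleMul_assoc]
  exact LinearMap.congr_fun h z

theorem shuffleMul_eq_Zmul_add_Zmul {u v : List B} (hu : u ≠ []) (hv : v ≠ []) :
    shuffleMul K d (single u 1) (single v 1) =
      Zmul K d (single u 1) (single v 1) +
        (-1 : K) ^ ((u.map d).sum * (v.map d).sum) • Zmul K d (single v 1) (single u 1) := by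
  obtain ⟨u, a, rfl⟩ := u.eq_nil_or_concat'.resolve_left hu
  obtain ⟨v, b, rfl⟩ := v.eq_nil_or_concat'.resolve_left hv
  rw [← appendLetter_single b v, ← appendLetter_single a u, Zmul_appendLetter, Zmul_appendLetter]
  simp only [appendLetter_single, shuffleMul_single]
  rw [shuffle_append_singleton, shuffle_comm d u (v ++ [b])]
  simp only [map_smul, List.map_append, List.sum_append, List.map_cons, List.map_nil,
    List.sum_cons, List.sum_nil]
  module

end HalfShuffle

/-- The half-shuffle multiplication on the reduced tensor module `T̄(V)` satisfies the
graded Zinbiel relation `u·(v·w) = (u·v)·w + (−1)^{|u||v|}(v·u)·w`. -/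
theorem zinbiel_relation {K B : Type*} [Field K] (d : B → ℕ) (u v w : List B)
    (hu : u ≠ []) (hv : v ≠ []) (hw : w ≠ []) :
    Zmul K d (Finsupp.single u 1) (Zmul K d (Finsupp.single v 1) (Finsupp.single w 1)) =
      Zmul K d (Zmul K d (Finsupp.single u 1) (Finsupp.single v 1)) (Finsupp.single w 1) +
        ((-1 : K) ^ ((u.map d).sum * (v.map d).sum)) •
          Zmul K d (Zmul K d (Finsupp.single v 1) (Finsupp.single u 1))
            (Finsupp.single w 1) := by
  rw [← Zmul_shuffleMul, shuffleMul_eq_Zmul_add_Zmul d hu hv]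
  simp only [map_add, map_smul, LinearMap.add_apply, LinearMap.smul_apply]
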